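/- arXiv:0903.0156 — 2 statements merged into one kernel-verified Lean document; each statement's English description precedes it below -/
import Mathlib

section
/- For each i ≥ 0 and each degree d, the map V restricts to an F_2-linear isomorphism from the degree-d homogeneous part of N^tmf_{8i} (the F_2-span of the monomials of T of weight 8i) onto the degree-(d − 8i) homogeneous part of M_bo(4i) (the F_2-span of the monomials of B of weight at most 4i). In other words, as graded F_2-vector spaces N^tmf_{8i} ≅ Σ^{8i} M_bo(4i), where Σ^{8i} denotes an upward shift of the grading by 8i. -/
open MvPolynomial

noncomputable section

/-- The dual Steenrod algebra at p = 2: the polynomial algebra `F₂[ζ₁, ζ₂, …]`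
over `F₂ = ZMod 2` with variables indexed by the positive integers. -/
abbrev DualSteenrod : Type := MvPolynomial ℕ+ (ZMod 2)

/-- The weight of the monomial `ζ^I`: `ω(ζ^I) = Σᵢ Iᵢ · 2^(i-1)`. -/
def wt (I : ℕ+ →₀ ℕ) : ℕ := I.sum fun i e => e * 2 ^ ((i : ℕ) - 1)

/-- The degree of the monomial `ζ^I`: `deg(ζ^I) = Σᵢ Iᵢ · (2^i − 1)`,
coming from the grading `deg(ζᵢ) = 2^i − 1`. -/
def degW (I : ℕ+ →₀ ℕ) : ℕ := I.sum fun i e => e * (2 ^ (i : ℕ) - 1)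

/-- Exponent condition cutting out `T = H_* tmf`: `8 ∣ I₁`, `4 ∣ I₂`, `2 ∣ I₃`. -/
def Tcond (I : ℕ+ →₀ ℕ) : Prop := 8 ∣ I 1 ∧ 4 ∣ I 2 ∧ 2 ∣ I 3

/-- Exponent condition cutting out `B = H_* bo`: `4 ∣ I₁`, `2 ∣ I₂`. -/
def Bcond (I : ℕ+ →₀ ℕ) : Prop := 4 ∣ I 1 ∧ 2 ∣ I 2

/-- Exponent condition cutting out `Z = H_* HZ`: `2 ∣ I₁`. -/
def Zcond (I : ℕ+ →₀ ℕ) : Prop := 2 ∣ I 1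

/-- `T = H_* tmf`: the `F₂`-span of the monomials `ζ^I` with `8 ∣ I₁`, `4 ∣ I₂`, `2 ∣ I₃`. -/
def Tsub : Submodule (ZMod 2) DualSteenrod :=
  Submodule.span (ZMod 2) {m | ∃ I, Tcond I ∧ m = monomial I (1 : ZMod 2)}

/-- `B = H_* bo`: the `F₂`-span of the monomials `ζ^I` with `4 ∣ I₁`, `2 ∣ I₂`. -/
def Bsub : Submodule (ZMod 2) DualSteenrod :=
  Submodule.span (ZMod 2) {m | ∃ I, Bcond I ∧ m = monomial I (1 : ZMod 2)}

/-- `Z = H_* HZ`: the `F₂`-span of the monomials `ζ^I` with `2 ∣ I₁`. -/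
def Zsub : Submodule (ZMod 2) DualSteenrod :=
  Submodule.span (ZMod 2) {m | ∃ I, Zcond I ∧ m = monomial I (1 : ZMod 2)}

/-- The `F₂`-algebra homomorphism `V : A → A` with `V(ζ₁) = 1` and
`V(ζᵢ) = ζ_{i−1}` for `i ≥ 2`. -/
def V : DualSteenrod →ₐ[ZMod 2] DualSteenrod :=
  aeval fun i : ℕ+ => if i = 1 then 1 else X (i - 1)

/-- `N^tmf_{8i}`: the `F₂`-span of the monomials of `T` of weight `8i`. -/
def Ntmf (i : ℕ) : Submodule (ZMod 2) DualSteenrod :=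
  Submodule.span (ZMod 2) {m | ∃ I, Tcond I ∧ wt I = 8 * i ∧ m = monomial I (1 : ZMod 2)}

/-- `N^bo_{4j}`: the `F₂`-span of the monomials of `B` of weight `4j`. -/
def Nbo (j : ℕ) : Submodule (ZMod 2) DualSteenrod :=
  Submodule.span (ZMod 2) {m | ∃ I, Bcond I ∧ wt I = 4 * j ∧ m = monomial I (1 : ZMod 2)}

/-- `N^Z_{2k}`: the `F₂`-span of the monomials of `Z` of weight `2k`. -/
def NZ (k : ℕ) : Submodule (ZMod 2) DualSteenrod :=
  Submodule.span (ZMod 2) {m | ∃ I, Zcond I ∧ wt I = 2 * k ∧ m = monomial I (1 : ZMod 2)}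

/-- `M_bo(4i)`: the `F₂`-span of the monomials of `B` of weight at most `4i`. -/
def Mbo (i : ℕ) : Submodule (ZMod 2) DualSteenrod :=
  Submodule.span (ZMod 2) {m | ∃ I, Bcond I ∧ wt I ≤ 4 * i ∧ m = monomial I (1 : ZMod 2)}

/-- `M_HZ(2j)`: the `F₂`-span of the monomials of `Z` of weight at most `2j`
(the homology of the `j`-th integral Brown–Gitler spectrum). -/
def MHZ (j : ℕ) : Submodule (ZMod 2) DualSteenrod :=
  Submodule.span (ZMod 2) {m | ∃ I, Zcond I ∧ wt I ≤ 2 * j ∧ m = monomial I (1 : ZMod 2)}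

/-- The degree-`d` homogeneous part of `N^tmf_{8i}` (degrees taken in `ℤ`). -/
def NtmfDeg (i : ℕ) (d : ℤ) : Submodule (ZMod 2) DualSteenrod :=
  Submodule.span (ZMod 2)
    {m | ∃ I, Tcond I ∧ wt I = 8 * i ∧ (degW I : ℤ) = d ∧ m = monomial I (1 : ZMod 2)}

/-- The degree-`d` homogeneous part of `M_bo(4i)` (degrees taken in `ℤ`). -/
def MboDeg (i : ℕ) (d : ℤ) : Submodule (ZMod 2) DualSteenrod :=
  Submodule.span (ZMod 2)
    {m | ∃ I, Bcond I ∧ wt I ≤ 4 * i ∧ (degW I : ℤ) = d ∧ m = monomial I (1 : ZMod 2)}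

/-- The degree-`d` homogeneous part of `N^bo_{4j}` (degrees taken in `ℤ`). -/
def NboDeg (j : ℕ) (d : ℤ) : Submodule (ZMod 2) DualSteenrod :=
  Submodule.span (ZMod 2)
    {m | ∃ I, Bcond I ∧ wt I = 4 * j ∧ (degW I : ℤ) = d ∧ m = monomial I (1 : ZMod 2)}

/-- The degree-`d` homogeneous part of `M_HZ(2j)` (degrees taken in `ℤ`). -/
def MHZdeg (j : ℕ) (d : ℤ) : Submodule (ZMod 2) DualSteenrod :=
  Submodule.span (ZMod 2)
    {m | ∃ I, Zcond I ∧ wt I ≤ 2 * j ∧ (degW I : ℤ) = d ∧ m = monomial I (1 : ZMod 2)}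

/-- The degree-`d` homogeneous part of `T` (degrees taken in `ℤ`). -/
def Tdeg (d : ℤ) : Submodule (ZMod 2) DualSteenrod :=
  Submodule.span (ZMod 2)
    {m | ∃ I, Tcond I ∧ (degW I : ℤ) = d ∧ m = monomial I (1 : ZMod 2)}

/-- Prepend an exponent `n` of `ζ₁` to the shifted exponent vector. -/
def consE (n : ℕ) (J : ℕ+ →₀ ℕ) : ℕ+ →₀ ℕ :=
  Finsupp.single 1 n + J.mapDomain (fun j => j + 1)

theorem succ_inj' : Function.Injective (fun j : ℕ+ => j + 1) := fun _ _ h => add_right_cancel h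

theorem consE_one (n : ℕ) (J : ℕ+ →₀ ℕ) : consE n J 1 = n := by
  have h : (J.mapDomain (fun j : ℕ+ => j + 1)) 1 = 0 := by
    apply Finsupp.mapDomain_notin_range
    rintro ⟨j, hj⟩
    have := congrArg PNat.val hj
    simp at this
  simp [consE, h]

theorem consE_succ (n : ℕ) (J : ℕ+ →₀ ℕ) (j : ℕ+) : consE n J (j + 1) = J j := by
  have h : (J.mapDomain (fun j : ℕ+ => j + 1)) (j + 1) = J j :=
    Finsupp.mapDomain_apply succ_inj' J j
  have h1 : (1 : ℕ+) ≠ j + 1 := by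
    intro hj
    have := congrArg PNat.val hj
    simp at this
  simp [consE, h, Finsupp.single_apply, h1]

theorem exists_consE (I : ℕ+ →₀ ℕ) : ∃ n J, I = consE n J := by
  refine ⟨I 1, I.comapDomain (fun j => j + 1) succ_inj'.injOn, ?_⟩
  ext i
  induction i using PNat.recOn with
  | one => rw [consE_one]
  | succ i _ => rw [consE_succ, Finsupp.comapDomain_apply]

theorem wt_consE (n : ℕ) (J : ℕ+ →₀ ℕ) : wt (consE n J) = n + 2 * wt J := by
  unfold wt consE
  rw [Finsupp.sum_add_index' (by simp) (by intros; ring), Finsupp.sum_single_index (by simp),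
    Finsupp.sum_mapDomain_index (by simp) (by intros; ring), Finsupp.mul_sum]
  congr 1
  · simp
  · refine Finsupp.sum_congr fun j _ => ?_
    obtain ⟨k, hk⟩ := Nat.exists_eq_add_one_of_ne_zero j.ne_zero
    simp [hk, pow_succ]
    ring

theorem degW_consE (n : ℕ) (J : ℕ+ →₀ ℕ) : degW (consE n J) = n + 2 * wt J + degW J := by
  unfold wt degW consE
  rw [Finsupp.sum_add_index' (by simp) (by intros; ring), Finsupp.sum_single_index (by simp),
    Finsupp.sum_mapDomain_index (by simp) (by intros; ring), Finsupp.mul_sum, add_assoc,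
    ← Finsupp.sum_add]
  congr 1
  · simp
  · refine Finsupp.sum_congr fun j _ => ?_
    obtain ⟨k, hk⟩ := Nat.exists_eq_add_one_of_ne_zero j.ne_zero
    obtain ⟨m, hm⟩ := Nat.exists_eq_add_one_of_ne_zero (pow_ne_zero k (two_ne_zero (α := ℕ)))
    have e1 : 2 ^ (k + 1 + 1) - 1 = 2 * 2 ^ k + (2 ^ (k + 1) - 1) := by
      rw [pow_succ, pow_succ]; omega
    simp only [PNat.add_coe, PNat.one_coe, hk, e1, Nat.add_sub_cancel]
    ring

theorem V_consE (n : ℕ) (J : ℕ+ →₀ ℕ) :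
    V (monomial (consE n J) (1 : ZMod 2)) = monomial J 1 := by
  have h : monomial (consE n J) (1 : ZMod 2)
      = X 1 ^ n * rename (fun j : ℕ+ => j + 1) (monomial J (1 : ZMod 2)) := by
    rw [rename_monomial, X_pow_eq_monomial, monomial_mul, one_mul, consE]
  have h2 : V (rename (fun j : ℕ+ => j + 1) (monomial J (1 : ZMod 2))) = monomial J 1 := by
    unfold V
    rw [aeval_rename]
    have : ((fun i : ℕ+ => if i = 1 then (1 : DualSteenrod) else X (i - 1)) ∘
        (fun j : ℕ+ => j + 1)) = X := by
      funext j
      have h1 : j + 1 ≠ 1 := by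
        intro hj
        have := congrArg PNat.val hj
        simp at this
      have h3 : j + 1 - 1 = j := by
        apply PNat.eq
        rw [PNat.sub_coe, if_pos (PNat.lt_add_left 1 j)]
        simp
      simp [h1, h3]
    rw [this, aeval_X_left_apply]
  rw [h, map_mul, h2, map_pow]
  simp [V]

theorem four_dvd_wt {J : ℕ+ →₀ ℕ} (h : Bcond J) : 4 ∣ wt J := by
  obtain ⟨a, K, rfl⟩ := exists_consE J
  obtain ⟨b, L, rfl⟩ := exists_consE K
  obtain ⟨h1, h2⟩ := h
  rw [consE_one] at h1
  rw [show (2 : ℕ+) = 1 + 1 from rfl, consE_succ, consE_one] at h2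
  rw [wt_consE, wt_consE]
  omega

theorem Tcond_consE (n : ℕ) (J : ℕ+ →₀ ℕ) : Tcond (consE n J) ↔ 8 ∣ n ∧ Bcond J := by
  unfold Tcond Bcond
  rw [consE_one, show (2 : ℕ+) = 1 + 1 from rfl, show (3 : ℕ+) = 1 + 1 + 1 from rfl,
    consE_succ, consE_succ]

/-- For each `i` and each degree `d`, `V` restricts to an `F₂`-linear isomorphism from
the degree-`d` part of `N^tmf_{8i}` onto the degree-`(d − 8i)` part of `M_bo(4i)`:
the image is exactly the target, and the restriction is injective.
Hence `N^tmf_{8i} ≅ Σ^{8i} M_bo(4i)` as graded `F₂`-vector spaces. -/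
theorem Ntmf_iso_suspension_Mbo :
    ∀ (i : ℕ) (d : ℤ),
      Submodule.map V.toLinearMap (NtmfDeg i d) = MboDeg i (d - 8 * i) ∧
      (∀ x ∈ NtmfDeg i d, ∀ y ∈ NtmfDeg i d, V x = V y → x = y) := by
  intro i d
  constructor
  · unfold NtmfDeg MboDeg
    rw [Submodule.map_span]
    congr 1
    ext m
    constructor
    · rintro ⟨_, ⟨I, hT, hw, hd, rfl⟩, rfl⟩
      obtain ⟨n, J, rfl⟩ := exists_consE I
      rw [Tcond_consE] at hT
      rw [wt_consE] at hw
      rw [degW_consE] at hd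
      exact ⟨J, hT.2, by omega, by omega, V_consE n J⟩
    · rintro ⟨J, hB, hw, hd, rfl⟩
      have h4 := four_dvd_wt hB
      refine ⟨_, ⟨consE (8 * i - 2 * wt J) J, ?_, ?_, ?_, rfl⟩, V_consE _ J⟩
      · rw [Tcond_consE]
        exact ⟨by omega, hB⟩
      · rw [wt_consE]; omega
      · rw [degW_consE]; omega
  · let U : DualSteenrod →ₗ[ZMod 2] DualSteenrod :=
      (basisMonomials ℕ+ (ZMod 2)).constr (ZMod 2)
        (fun J => monomial (consE (8 * i - 2 * wt J) J) (1 : ZMod 2))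
    have hU : ∀ J, U (monomial J 1) = monomial (consE (8 * i - 2 * wt J) J) (1 : ZMod 2) := by
      intro J
      have := (basisMonomials ℕ+ (ZMod 2)).constr_basis (ZMod 2)
        (fun J => monomial (consE (8 * i - 2 * wt J) J) (1 : ZMod 2)) J
      rwa [coe_basisMonomials] at this
    have key : ∀ x ∈ NtmfDeg i d, U (V x) = x := by
      intro x hx
      refine LinearMap.eqOn_span (f := U ∘ₗ V.toLinearMap) (g := LinearMap.id) ?_ hx
      rintro _ ⟨I, hT, hw, hd, rfl⟩
      obtain ⟨n, J, rfl⟩ := exists_consE I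
      rw [wt_consE] at hw
      change U (V _) = monomial (consE n J) 1
      rw [V_consE, hU, show 8 * i - 2 * wt J = n by omega]
    intro x hx y hy h
    rw [← key x hx, ← key y hy, h]
end
end

section
/- The algebra endomorphism V of A restricts to a surjective F_2-algebra homomorphism V_bo : B → Z. -/
open MvPolynomial

noncomputable section

lemma succ_inj_pnat : Function.Injective (fun i : ℕ+ => i + 1) :=
  fun _ _ h => add_right_cancel h

/-- The index shift: `(shiftI I) i = I (i + 1)`. -/
def shiftI (I : ℕ+ →₀ ℕ) : ℕ+ →₀ ℕ :=
  I.comapDomain (fun i : ℕ+ => i + 1) succ_inj_pnat.injOn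

lemma shiftI_apply (I : ℕ+ →₀ ℕ) (i : ℕ+) : shiftI I i = I (i + 1) := rfl

lemma V_monomial (I : ℕ+ →₀ ℕ) :
    V (monomial I (1 : ZMod 2)) = monomial (shiftI I) (1 : ZMod 2) := by
  induction I using Finsupp.induction_linear with
  | zero =>
    have h : shiftI 0 = 0 := by ext i; simp [shiftI_apply]
    rw [h]
    exact map_one V
  | add f g hf hg =>
    have h : shiftI (f + g) = shiftI f + shiftI g := by ext i; simp [shiftI_apply]
    have h2 : ∀ a b : ℕ+ →₀ ℕ, monomial (a + b) (1 : ZMod 2) = monomial a 1 * monomial b 1 := by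
      intro a b; simp [monomial_mul]
    rw [h, h2, h2, map_mul, hf, hg]
  | single a n =>
    rw [← X_pow_eq_monomial, map_pow]
    by_cases ha : a = 1
    · have h : shiftI (Finsupp.single a n) = 0 := by
        ext i
        rw [shiftI_apply, Finsupp.single_apply, if_neg]
        · rfl
        · rw [ha]; exact (PNat.lt_add_left 1 i).ne
      rw [h]
      simp [V, ha]
    · obtain ⟨b, rfl⟩ := PNat.exists_eq_succ_of_ne_one ha
      have h : shiftI (Finsupp.single (b + 1) n) = Finsupp.single b n := by
        ext i
        rw [shiftI_apply, Finsupp.single_apply, Finsupp.single_apply]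
        simp
      have hb : b + 1 - 1 = b := by
        apply PNat.eq
        rw [PNat.sub_coe, if_pos (PNat.lt_add_left 1 b)]
        simp
      rw [h, ← X_pow_eq_monomial]
      simp only [V, aeval_X, if_neg ha, hb]

/-- The algebra endomorphism `V` of `A` restricts to a surjective `F₂`-algebra
homomorphism `V_bo : B → Z`: the image of `B` under `V` is exactly `Z`. -/
theorem V_restricts_to_surjection_B_onto_Z :
    Submodule.map V.toLinearMap Bsub = Zsub := by
  rw [Bsub, Zsub, Submodule.map_span]
  congr 1
  ext m
  constructor
  · rintro ⟨_, ⟨I, hI, rfl⟩, rfl⟩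
    exact ⟨shiftI I, hI.2, V_monomial I⟩
  · rintro ⟨J, hJ, rfl⟩
    refine ⟨_, ⟨J.mapDomain (fun i : ℕ+ => i + 1), ⟨?_, ?_⟩, rfl⟩, ?_⟩
    · rw [Finsupp.mapDomain_of_notMem_range]
      · exact dvd_zero 4
      · rintro ⟨i, hi⟩
        exact (PNat.lt_add_left 1 i).ne hi.symm
    · have h := Finsupp.mapDomain_apply succ_inj_pnat J 1
      change 2 ∣ (J.mapDomain (fun i : ℕ+ => i + 1)) ((1 : ℕ+) + 1)
      rw [h]
      exact hJ
    · refine (V_monomial _).trans ?_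
      have h : shiftI (J.mapDomain (fun i : ℕ+ => i + 1)) = J := by
        ext i
        exact Finsupp.mapDomain_apply succ_inj_pnat J i
      rw [h]
end
end
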